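/- Cartan's test implies vanishing of the Spencer cohomology groups H^{0,l}: let T ⊆ Λ^{k+1}(W;V) be a tableau of k-derivations with trivial symbol and suppose there is a full flag 0 = W_0 ⊂ … ⊂ W_n = W for which dim T^{(1)} = s_1 + 2·s_2 + … + n·s_n (Cartan's bound is attained). Then for every l ≥ 2 the Spencer sequence is exact at Λ^l(W;T): every alternating l-linear map ξ : W^l → T with δξ = 0 equals δζ for some alternating (l−1)-linear map ζ : W^{l−1} → T^{(1)}, where δζ ∈ Λ^l(W;T) is the alternation of (w_1,…,w_l) ↦ ζ(w_1,…,w_{l−1})(w_l). -/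

import Mathlib

open Module

variable {W : Type*} [AddCommGroup W] [Module ℝ W] [FiniteDimensional ℝ W]
variable {V : Type*} [AddCommGroup V] [Module ℝ V] [FiniteDimensional ℝ V]

/-- The alternating `m`-linear maps `W^m → V` vanishing whenever all of their arguments lie
in the subspace `U ⊆ W`.  For a tableau `T ⊆ Λ^m(W;V)`, the subspace `T_U` is
`T ⊓ vanishingOn m U`. -/
def vanishingOn (m : ℕ) (U : Submodule ℝ W) :
    Submodule ℝ (AlternatingMap ℝ W V (Fin m)) where
  carrier := {c | ∀ u : Fin m → W, (∀ i, u i ∈ U) → c u = 0}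
  zero_mem' := by intro u _; simp
  add_mem' := by intro a b ha hb u hu; simp [ha u hu, hb u hu]
  smul_mem' := by intro r a ha u hu; simp [ha u hu]

/-- The first prolongation `T^{(1)} = {ξ ∈ Hom(W,T) : δξ = 0}` of a tableau
`T ⊆ Λ^{k+1}(W;V)` of `k`-derivations with trivial symbol, where the Spencer differential is
`(δξ)(w₀,…,w_{k+1}) = ∑ᵢ (-1)^i ξ(wᵢ)(w₀,…,ŵᵢ,…,w_{k+1})`. -/
def prolongation {k : ℕ} (T : Submodule ℝ (AlternatingMap ℝ W V (Fin (k + 1)))) :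
    Submodule ℝ (W →ₗ[ℝ] AlternatingMap ℝ W V (Fin (k + 1))) where
  carrier := {ξ | (∀ w : W, ξ w ∈ T) ∧
    ∀ w : Fin (k + 2) → W,
      ∑ i : Fin (k + 2), ((-1 : ℝ) ^ (i : ℕ)) • ξ (w i) (w ∘ i.succAbove) = 0}
  zero_mem' := by
    refine ⟨fun w => T.zero_mem, fun w => ?_⟩
    simp
  add_mem' := by
    rintro a b ⟨ha1, ha2⟩ ⟨hb1, hb2⟩
    refine ⟨fun w => T.add_mem (ha1 w) (hb1 w), fun w => ?_⟩
    have h := ha2 w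
    have h' := hb2 w
    simp only [LinearMap.add_apply, AlternatingMap.add_apply, smul_add,
      Finset.sum_add_distrib, h, h', add_zero]
  smul_mem' := by
    rintro c ξ ⟨h1, h2⟩
    refine ⟨fun w => T.smul_mem c (h1 w), fun w => ?_⟩
    have h := h2 w
    calc ∑ i : Fin (k + 2), ((-1 : ℝ) ^ (i : ℕ)) • (c • ξ) (w i) (w ∘ i.succAbove)
        = c • ∑ i : Fin (k + 2), ((-1 : ℝ) ^ (i : ℕ)) • ξ (w i) (w ∘ i.succAbove) := by
          rw [Finset.smul_sum]
          refine Finset.sum_congr rfl fun i _ => ?_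
          rw [LinearMap.smul_apply, AlternatingMap.smul_apply, smul_comm]
      _ = 0 := by rw [h, smul_zero]

/-- `δξ = 0` for an alternating `l`-linear map `ξ` on `W` with values in `Λ^{k+1}(W;V)`:
the Spencer differential `δξ ∈ Λ^{k+l+1}(W;V)` is the full alternation of
`(w₁,…,w_l,u₀,…,u_k) ↦ ξ(w₁,…,w_l)(u₀,…,u_k)`. -/
def SpencerZero {k l : ℕ}
    (ξ : AlternatingMap ℝ W (AlternatingMap ℝ W V (Fin (k + 1))) (Fin l)) : Prop :=
  ∀ w : Fin (l + (k + 1)) → W,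
    ∑ σ : Equiv.Perm (Fin (l + (k + 1))),
      ((Equiv.Perm.sign σ : ℤ) : ℝ) •
        ξ (fun j : Fin l => w (σ (Fin.castAdd (k + 1) j)))
          (fun j : Fin (k + 1) => w (σ (Fin.natAdd l j))) = 0

/-!
Write `W_i` for the flag, and `T^{(1)}_U` for the elements of `T^{(1)}` that vanish on a subspace
`U`. If `e` spans `W_{i+1}` modulo `W_i`, then evaluation at `e` maps `T^{(1)}_{W_i}` to `T_{W_i}`
with kernel `T^{(1)}_{W_{i+1}}`. Adding up dimensions, `dim T^{(1)} ≤ ∑ dim T_{W_i}`, which is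
Cartan's bound, and equality means that all these evaluations are surjective. In that case a cocycle
can be made to vanish under contraction with `W_0, W_1, …` successively: if `ι_w ξ = 0` for `w` in
`W_i`, then `δξ = 0` forces `ξ` to have values in `T_{W_i}`, so that `ι_e ξ` lifts through the
evaluation at `e` to a cochain whose coboundary agrees with `ξ` under contraction with `W_{i+1}`.
-/

section Flag

variable {K M : Type*} [DivisionRing K] [AddCommGroup M] [Module K M]

theorem exists_span_singleton_sup_eq {U U' : Submodule K M} (hle : U ≤ U')
    (hfinrank : finrank K U' = finrank K U + 1) : ∃ e : M, K ∙ e ⊔ U = U' := by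
  have : FiniteDimensional K U' := FiniteDimensional.of_finrank_pos (by omega)
  obtain ⟨e, heU', heU⟩ := SetLike.exists_of_lt (hle.lt_of_ne (by rintro rfl; omega))
  have hsup : K ∙ e ⊔ U ≤ U' := sup_le ((Submodule.span_singleton_le_iff_mem e _).2 heU') hle
  have := Submodule.finiteDimensional_of_le hsup
  refine ⟨e, Submodule.eq_of_le_of_finrank_le hsup ?_⟩
  rw [hfinrank]
  exact Submodule.finrank_lt_finrank_of_lt (Submodule.covBy_span_singleton_sup heU).lt

theorem exists_basis_flag_eq {n : ℕ} {Wf : Fin (n + 1) → Submodule K M} (hmono : Monotone Wf)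
    (hbot : Wf 0 = ⊥) (htop : Wf (Fin.last n) = ⊤) (hdim : ∀ i, finrank K (Wf i) = i) :
    ∃ b : Basis (Fin n) K M, b.flag = Wf := by
  have hstep (i : Fin n) : ∃ e : M, K ∙ e ⊔ Wf i.castSucc = Wf i.succ :=
    exists_span_singleton_sup_eq (hmono i.castSucc_le_succ) (by simp [hdim])
  choose e he using hstep
  have hspan (i : Fin (n + 1)) : Wf i ≤ Submodule.span K (Set.range e) := by
    induction i using Fin.induction with
    | zero => exact hbot.trans_le bot_le
    | succ i ih =>
      rw [← he i]
      exact sup_le (Submodule.span_mono (by simp)) ih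
  have hfinrank : Fintype.card (Fin n) = finrank K M := by
    rw [Fintype.card_fin, ← finrank_top, ← htop, hdim, Fin.val_last]
  let b := basisOfTopLeSpanOfCardEqFinrank e (htop ▸ hspan (Fin.last n)) hfinrank
  refine ⟨b, funext fun i => ?_⟩
  induction i using Fin.induction with
  | zero => rw [b.flag_zero, hbot]
  | succ i ih => rw [b.flag_succ, ih, coe_basisOfTopLeSpanOfCardEqFinrank, he]

end Flag

section Antisymmetrization

variable {ι M N : Type*} [Fintype ι] [DecidableEq ι] [AddCommGroup N]

/-- The signed sum of a function of a family of vectors over all permutations of the family.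
The function need not be multilinear, so that the rearrangement identities below apply to mere
expressions in their arguments; on multilinear maps this is `MultilinearMap.alternatization`. -/
def antisymmetrization (f : (ι → M) → N) (w : ι → M) : N :=
  ∑ σ : Equiv.Perm ι, Equiv.Perm.sign σ • f (w ∘ σ)

theorem antisymmetrization_comp_perm (f : (ι → M) → N) (τ : Equiv.Perm ι) (w : ι → M) :
    antisymmetrization (fun v => f (v ∘ τ)) w = Equiv.Perm.sign τ • antisymmetrization f w := by
  rw [antisymmetrization, antisymmetrization, Finset.smul_sum]
  refine Fintype.sum_equiv (Equiv.mulRight τ) _ _ fun σ => ?_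
  rw [Equiv.coe_mulRight, smul_smul, Equiv.Perm.sign_mul, mul_left_comm, Int.units_mul_self,
    mul_one]
  rfl

theorem antisymmetrization_sum_cycleRange {p : ℕ} (κ : Fin p ↪ ι) (f : (ι → M) → N) (w : ι → M) :
    antisymmetrization (fun v => ∑ i : Fin p, (-1 : ℤ) ^ (i : ℕ) •
        f (v ∘ Equiv.Perm.viaFintypeEmbedding i.cycleRange.symm κ)) w =
      p • antisymmetrization f w := by
  have hterm (i : Fin p) :
      (-1 : ℤ) ^ (i : ℕ) • antisymmetrization
        (fun v => f (v ∘ Equiv.Perm.viaFintypeEmbedding i.cycleRange.symm κ)) w =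
      antisymmetrization f w := by
    rw [antisymmetrization_comp_perm, Equiv.Perm.viaFintypeEmbedding_sign, Equiv.Perm.sign_symm,
      Fin.sign_cycleRange, Units.smul_def, smul_smul, Units.val_pow_eq_pow_val, Units.val_neg,
      Units.val_one, ← mul_pow, neg_one_mul, neg_neg, one_pow, one_smul]
  calc
    _ = ∑ i : Fin p, (-1 : ℤ) ^ (i : ℕ) • antisymmetrization
          (fun v => f (v ∘ Equiv.Perm.viaFintypeEmbedding i.cycleRange.symm κ)) w := by
      simp only [antisymmetrization, Finset.smul_sum]
      rw [Finset.sum_comm]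
      exact Fintype.sum_congr _ _ fun i => Fintype.sum_congr _ _ fun σ => smul_comm _ _ _
    _ = p • antisymmetrization f w := by
      rw [Fintype.sum_congr _ _ hterm, Finset.sum_const, Finset.card_univ, Fintype.card_fin]

end Antisymmetrization

theorem neg_one_pow_smul_eq_zsmul {R N : Type*} [Ring R] [AddCommGroup N] [Module R N]
    (i : ℕ) (x : N) : (-1 : R) ^ i • x = (-1 : ℤ) ^ i • x := by
  rw [← Int.cast_smul_eq_zsmul R]
  push_cast
  rfl

section AlternatingMap

variable {R M N : Type*} [CommRing R] [AddCommGroup M] [Module R M] [AddCommGroup N] [Module R N]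

theorem alternatingMap_sum_apply {ι κ : Type*} (s : Finset κ) (f : κ → M [⋀^ι]→ₗ[R] N)
    (v : ι → M) : (∑ i ∈ s, f i) v = ∑ i ∈ s, f i v := by
  classical
  induction s using Finset.induction_on <;> simp_all

theorem map_eq_zero_of_mem_ker_curryLeft {l : ℕ} {f : M [⋀^Fin (l + 1)]→ₗ[R] N}
    {w : Fin (l + 1) → M} {j : Fin (l + 1)} (hj : w j ∈ LinearMap.ker f.curryLeft) : f w = 0 := by
  rw [← j.insertNth_self_removeNth w, f.map_insertNth, ← f.curryLeft_apply_apply,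
    LinearMap.mem_ker.1 hj, AlternatingMap.zero_apply, smul_zero]

theorem eq_zero_of_curryLeft_eq_zero {l : ℕ} {f : M [⋀^Fin (l + 1)]→ₗ[R] N}
    (hf : f.curryLeft = 0) : f = 0 :=
  AlternatingMap.ext fun w => map_eq_zero_of_mem_ker_curryLeft (j := 0) (by simp [hf])

theorem span_singleton_sup_le_ker_curryLeft {l : ℕ} {f : M [⋀^Fin (l + 2)]→ₗ[R] N}
    {U : Submodule R M} (hU : U ≤ LinearMap.ker f.curryLeft) (e : M) :
    R ∙ e ⊔ U ≤ LinearMap.ker (f.curryLeft e).curryLeft :=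
  sup_le ((Submodule.span_singleton_le_iff_mem e _).2 (f.curryLeft_same e)) fun _ hu =>
    AlternatingMap.ext fun _ => map_eq_zero_of_mem_ker_curryLeft (j := 1) (hU hu)

/-- Only the permutations preserving the two blocks contribute to the sum. -/
theorem antisymmetrization_sumElim {α β : Type*} [Fintype α] [Fintype β]
    [DecidableEq α] [DecidableEq β] (f : M [⋀^α]→ₗ[R] M [⋀^β]→ₗ[R] N) {w : α → M} {u : β → M}
    (hf : ∀ (v : α → M) (a : α) (b : β), v a = u b → f v = 0) :
    antisymmetrization (fun v : α ⊕ β → M => f (v ∘ Sum.inl) (v ∘ Sum.inr)) (Sum.elim w u) =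
      ((Fintype.card α).factorial * (Fintype.card β).factorial) • f w u := by
  have hblock (σ : Equiv.Perm α × Equiv.Perm β) :
      f w u = Equiv.Perm.sign (Equiv.Perm.sumCongrHom α β σ) •
        f ((Sum.elim w u ∘ Equiv.Perm.sumCongrHom α β σ) ∘ Sum.inl)
          ((Sum.elim w u ∘ Equiv.Perm.sumCongrHom α β σ) ∘ Sum.inr) := by
    have hf' := f.map_perm w σ.1
    have hfu := (f w).map_perm u σ.2
    change _ = Equiv.Perm.sign (Equiv.Perm.sumCongr σ.1 σ.2) • f (w ∘ σ.1) (u ∘ σ.2)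
    rw [hf', AlternatingMap.smul_apply, hfu, Equiv.Perm.sign_sumCongr, smul_smul, smul_smul,
      mul_assoc, mul_mul_mul_comm, mul_comm]
    simp [Int.units_mul_self]
  have hmixed (σ : Equiv.Perm (α ⊕ β)) (hσ : σ ∉ Set.range (Equiv.Perm.sumCongrHom α β)) :
      Equiv.Perm.sign σ • f ((Sum.elim w u ∘ σ) ∘ Sum.inl) ((Sum.elim w u ∘ σ) ∘ Sum.inr) = 0 := by
    obtain ⟨a, b, hab⟩ : ∃ a b, σ (Sum.inl a) = Sum.inr b := by
      contrapose! hσ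
      refine Equiv.Perm.mem_sumCongrHom_range_of_perm_mapsTo_inl ?_
      rintro _ ⟨a, rfl⟩
      rcases hx : σ (Sum.inl a) with a' | b
      · exact ⟨a', rfl⟩
      · exact absurd hx (hσ a b)
    rw [hf _ a b (by simp [hab]), AlternatingMap.zero_apply, smul_zero]
  rw [antisymmetrization, ← Fintype.sum_of_injective _ Equiv.Perm.sumCongrHom_injective
    (fun _ => f w u) _ hmixed hblock, Finset.sum_const, Finset.card_univ, Fintype.card_prod,
    Fintype.card_perm, Fintype.card_perm]

/-- `LinearMap.flip` for an alternating map with values in linear maps. -/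
def alternatingFlip {A ι : Type*} [AddCommGroup A] [Module R A] :
    (M [⋀^ι]→ₗ[R] (N →ₗ[R] A)) →ₗ[R] N →ₗ[R] M [⋀^ι]→ₗ[R] A :=
  LinearMap.mk₂ R (fun ζ x => (LinearMap.applyₗ x).compAlternatingMap ζ)
    (fun _ _ _ => rfl) (fun _ _ _ => rfl)
    (fun _ _ _ => by ext; simp) (fun _ _ _ => by ext; simp)

end AlternatingMap

section SpencerDelta

variable {R E A : Type*} [CommRing R] [AddCommGroup E] [Module R E] [AddCommGroup A] [Module R A]

/-- The Spencer differential `Λ^l(E; Hom(E, A)) → Λ^{l+1}(E; A)`, the alternation of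
`(w₁, …, w_{l+1}) ↦ ζ(w₁, …, w_l)(w_{l+1})`. The omitted argument contributes the sign `(-1)^i`
with `i` counted from `0`. -/
def spencerDelta {l : ℕ} :
    (E [⋀^Fin l]→ₗ[R] (E →ₗ[R] A)) →ₗ[R] E [⋀^Fin (l + 1)]→ₗ[R] A :=
  AlternatingMap.alternatizeUncurryFinLM ∘ₗ alternatingFlip

theorem spencerDelta_apply {l : ℕ} (ζ : E [⋀^Fin l]→ₗ[R] (E →ₗ[R] A)) (w : Fin (l + 1) → E) :
    spencerDelta ζ w = ∑ i : Fin (l + 1), (-1 : ℤ) ^ (i : ℕ) • ζ (i.removeNth w) (w i) :=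
  AlternatingMap.alternatizeUncurryFin_apply _ _

theorem spencerDelta_curryLeft_of_curryLeft_eq_zero {l : ℕ}
    {ζ : E [⋀^Fin (l + 1)]→ₗ[R] (E →ₗ[R] A)} {x : E} (hx : ζ.curryLeft x = 0)
    (w : Fin (l + 1) → E) : (spencerDelta ζ).curryLeft x w = ζ w x := by
  have homitted (i : Fin (l + 1)) : ζ (i.succ.removeNth (Matrix.vecCons x w)) = 0 :=
    map_eq_zero_of_mem_ker_curryLeft (j := 0) hx
  rw [AlternatingMap.curryLeft_apply_apply, spencerDelta_apply, Fin.sum_univ_succ]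
  simp [homitted]

theorem spencerDelta_mem {m : ℕ} {S : Submodule R A} {ζ : E [⋀^Fin m]→ₗ[R] (E →ₗ[R] A)}
    (hζ : ∀ w x, ζ w x ∈ S) (w : Fin (m + 1) → E) :
    spencerDelta ζ w ∈ S := by
  rw [spencerDelta_apply]
  exact S.sum_mem fun i _ => S.toAddSubgroup.zsmul_mem (hζ _ _) _

theorem antisymmetrization_spencerDelta {m p : ℕ}
    (ζ : E [⋀^Fin m]→ₗ[R] (E →ₗ[R] E [⋀^Fin p]→ₗ[R] A)) (w : Fin (m + 1) ⊕ Fin p → E) :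
    antisymmetrization (fun v => spencerDelta ζ (v ∘ Sum.inl) (v ∘ Sum.inr)) w =
      (m + 1) • antisymmetrization
        (fun v => ζ (fun j => v (Sum.inl j.succ)) (v (Sum.inl 0)) (v ∘ Sum.inr)) w := by
  rw [← antisymmetrization_sum_cycleRange Function.Embedding.inl]
  congr 1
  funext v
  rw [spencerDelta_apply, alternatingMap_sum_apply]
  refine Fintype.sum_congr _ _ fun i => ?_
  have hinl (j : Fin (m + 1)) : Equiv.Perm.viaFintypeEmbedding i.cycleRange.symm
      (Function.Embedding.inl (β := Fin p)) (Sum.inl j) = Sum.inl (i.cycleRange.symm j) :=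
    Equiv.Perm.viaFintypeEmbedding_apply_image _ Function.Embedding.inl j
  have hinr (j : Fin p) : Equiv.Perm.viaFintypeEmbedding i.cycleRange.symm
      (Function.Embedding.inl (α := Fin (m + 1))) (Sum.inr j) = Sum.inr j :=
    Equiv.Perm.viaFintypeEmbedding_apply_notMem_range _ _ (by simp)
  simp only [AlternatingMap.smul_apply, Function.comp_def, hinl, hinr, Fin.cycleRange_symm_zero,
    Fin.cycleRange_symm_succ]
  rfl

theorem antisymmetrization_eq_zero_of_alternatizeUncurryFin_eq_zero
    [IsAddTorsionFree A] {m p : ℕ} {ζ : E [⋀^Fin m]→ₗ[R] (E →ₗ[R] E [⋀^Fin p]→ₗ[R] A)}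
    (hζ : ∀ v, AlternatingMap.alternatizeUncurryFin (ζ v) = 0) (w : Fin (m + 1) ⊕ Fin p → E) :
    antisymmetrization
      (fun v => ζ (fun j => v (Sum.inl j.succ)) (v (Sum.inl 0)) (v ∘ Sum.inr)) w = 0 := by
  -- The identity `hζ` alternates over the first argument and those of the second block.
  let κ : Fin (p + 1) ↪ Fin (m + 1) ⊕ Fin p :=
    ⟨Fin.cons (Sum.inl 0) Sum.inr, Fin.cons_injective_iff.2 ⟨by simp, Sum.inr_injective⟩⟩
  suffices h : (p + 1) • antisymmetrization
      (fun v => ζ (fun j => v (Sum.inl j.succ)) (v (Sum.inl 0)) (v ∘ Sum.inr)) w = 0 from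
    (smul_eq_zero.1 h).resolve_left p.succ_ne_zero
  rw [← antisymmetrization_sum_cycleRange κ]
  refine Finset.sum_eq_zero fun σ _ => smul_eq_zero_of_right _ ?_
  have hsum := AlternatingMap.congr_fun (hζ fun j => (w ∘ σ) (Sum.inl j.succ)) ((w ∘ σ) ∘ κ)
  rw [AlternatingMap.alternatizeUncurryFin_apply] at hsum
  refine Eq.trans (Fintype.sum_congr _ _ fun i => ?_) hsum
  have hκ (j : Fin (p + 1)) : Equiv.Perm.viaFintypeEmbedding i.cycleRange.symm κ (κ j) =
      κ (i.cycleRange.symm j) := Equiv.Perm.viaFintypeEmbedding_apply_image _ κ j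
  have hzero : Equiv.Perm.viaFintypeEmbedding i.cycleRange.symm κ (Sum.inl 0) = κ i :=
    (hκ 0).trans (by rw [Fin.cycleRange_symm_zero])
  have hinr (j : Fin p) : Equiv.Perm.viaFintypeEmbedding i.cycleRange.symm κ (Sum.inr j) =
      κ (i.succAbove j) := (hκ j.succ).trans (by rw [Fin.cycleRange_symm_succ])
  have hinl (j : Fin m) : Equiv.Perm.viaFintypeEmbedding i.cycleRange.symm κ (Sum.inl j.succ) =
      Sum.inl j.succ :=
    Equiv.Perm.viaFintypeEmbedding_apply_notMem_range _ _ (by simp [κ])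
  simp only [Function.comp_def, hzero, hinl, hinr]
  rfl

end SpencerDelta

section Tableau

variable {E F : Type*} [AddCommGroup E] [Module ℝ E] [AddCommGroup F] [Module ℝ F]

theorem mem_prolongation_iff {k : ℕ} {T : Submodule ℝ (E [⋀^Fin (k + 1)]→ₗ[ℝ] F)}
    {p : E →ₗ[ℝ] E [⋀^Fin (k + 1)]→ₗ[ℝ] F} :
    p ∈ prolongation T ↔ (∀ x, p x ∈ T) ∧ AlternatingMap.alternatizeUncurryFin p = 0 := by
  refine and_congr_right' ?_
  simp only [AlternatingMap.ext_iff, AlternatingMap.alternatizeUncurryFin_apply,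
    neg_one_pow_smul_eq_zsmul]
  rfl

theorem spencerZero_iff {k l : ℕ} {ξ : E [⋀^Fin l]→ₗ[ℝ] E [⋀^Fin (k + 1)]→ₗ[ℝ] F} :
    SpencerZero ξ ↔ ∀ w : Fin l ⊕ Fin (k + 1) → E,
      antisymmetrization (fun v => ξ (v ∘ Sum.inl) (v ∘ Sum.inr)) w = 0 := by
  refine (Equiv.arrowCongr finSumFinEquiv (Equiv.refl E)).symm.forall_congr fun w => ?_
  refine Eq.congr_left (Fintype.sum_equiv finSumFinEquiv.symm.permCongr _ _ fun σ => ?_)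
  rw [Equiv.Perm.sign_permCongr, Int.cast_smul_eq_zsmul, Units.smul_def]
  congr 2 <;> simp [Function.comp_def]

theorem SpencerZero.sub {k l : ℕ} {ξ η : E [⋀^Fin l]→ₗ[ℝ] E [⋀^Fin (k + 1)]→ₗ[ℝ] F}
    (hξ : SpencerZero ξ) (hη : SpencerZero η) : SpencerZero (ξ - η) := by
  intro w
  simp only [AlternatingMap.sub_apply, smul_sub, Finset.sum_sub_distrib, hξ w, hη w, sub_zero]

theorem spencerZero_spencerDelta {k m : ℕ}
    {ζ : E [⋀^Fin m]→ₗ[ℝ] (E →ₗ[ℝ] E [⋀^Fin (k + 1)]→ₗ[ℝ] F)}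
    (hζ : ∀ w, AlternatingMap.alternatizeUncurryFin (ζ w) = 0) : SpencerZero (spencerDelta ζ) :=
  have := IsAddTorsionFree.of_isTorsionFree ℝ F
  spencerZero_iff.2 fun w => by
    rw [antisymmetrization_spencerDelta,
      antisymmetrization_eq_zero_of_alternatizeUncurryFin_eq_zero hζ, smul_zero]

theorem SpencerZero.mem_vanishingOn {k l : ℕ}
    {ξ : E [⋀^Fin (l + 1)]→ₗ[ℝ] E [⋀^Fin (k + 1)]→ₗ[ℝ] F} (hξ : SpencerZero ξ)
    {U : Submodule ℝ E} (hU : U ≤ LinearMap.ker ξ.curryLeft) (w : Fin (l + 1) → E) :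
    ξ w ∈ vanishingOn (k + 1) U := by
  intro u hu
  have h := antisymmetrization_sumElim ξ (w := w) (u := u) fun v a b hab =>
    map_eq_zero_of_mem_ker_curryLeft (j := a) (hab ▸ hU (hu b))
  rw [spencerZero_iff.1 hξ, ← Nat.cast_smul_eq_nsmul ℝ] at h
  exact (smul_eq_zero.1 h.symm).resolve_left (by positivity)

/-- The elements of the prolongation that vanish on `U`. -/
def prolongationKer {k : ℕ} (T : Submodule ℝ (E [⋀^Fin (k + 1)]→ₗ[ℝ] F)) (U : Submodule ℝ E) :
    Submodule ℝ (E →ₗ[ℝ] E [⋀^Fin (k + 1)]→ₗ[ℝ] F) :=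
  prolongation T ⊓ LinearMap.ker (LinearMap.domRestrict' U)

section Prolongation

variable {k : ℕ} {T : Submodule ℝ (E [⋀^Fin (k + 1)]→ₗ[ℝ] F)} {U : Submodule ℝ E}

theorem mem_prolongationKer_iff {p : E →ₗ[ℝ] E [⋀^Fin (k + 1)]→ₗ[ℝ] F} :
    p ∈ prolongationKer T U ↔ p ∈ prolongation T ∧ U ≤ LinearMap.ker p :=
  and_congr_right' (LinearMap.ext_iff.trans Subtype.forall)

variable (T) in
theorem prolongationKer_bot : prolongationKer T ⊥ = prolongation T :=
  Submodule.ext fun _ => mem_prolongationKer_iff.trans (and_iff_left bot_le)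

variable (T) in
theorem prolongationKer_top : prolongationKer T ⊤ = ⊥ :=
  (Submodule.eq_bot_iff _).2 fun _ hp =>
    LinearMap.ker_eq_top.1 (top_le_iff.1 (mem_prolongationKer_iff.1 hp).2)

theorem apply_mem_of_mem_prolongationKer {p : E →ₗ[ℝ] E [⋀^Fin (k + 1)]→ₗ[ℝ] F}
    (hp : p ∈ prolongationKer T U) (x : E) : p x ∈ T ⊓ vanishingOn (k + 1) U := by
  obtain ⟨hpT, hpU⟩ := mem_prolongationKer_iff.1 hp
  refine ⟨hpT.1 x, fun u hu => ?_⟩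
  have h := AlternatingMap.congr_fun (mem_prolongation_iff.1 hpT).2 (Matrix.vecCons x u)
  have hvanish (i : Fin (k + 1)) : p (u i) = 0 := hpU (hu i)
  simpa [AlternatingMap.alternatizeUncurryFin_apply, Fin.sum_univ_succ, hvanish] using h

variable (T U) in
/-- Evaluation at `e`, from the elements of the prolongation vanishing on `U` to `T_U`. -/
def prolongationEval (e : E) :
    prolongationKer T U →ₗ[ℝ]
      (T ⊓ vanishingOn (k + 1) U : Submodule ℝ (E [⋀^Fin (k + 1)]→ₗ[ℝ] F)) :=
  (LinearMap.applyₗ e ∘ₗ (prolongationKer T U).subtype).codRestrict _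
    fun p => apply_mem_of_mem_prolongationKer p.2 e

variable (T U) in
theorem ker_prolongationEval (e : E) : LinearMap.ker (prolongationEval T U e) =
    (prolongationKer T (ℝ ∙ e ⊔ U)).submoduleOf (prolongationKer T U) := by
  ext p
  have hp := mem_prolongationKer_iff.1 p.2
  rw [Submodule.submoduleOf, Submodule.mem_comap, Submodule.subtype_apply, mem_prolongationKer_iff,
    sup_le_iff, Submodule.span_singleton_le_iff_mem, and_iff_right hp.1, and_iff_left hp.2]
  exact Subtype.ext_iff

theorem finiteDimensional_prolongation [FiniteDimensional ℝ E] [FiniteDimensional ℝ T] :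
    FiniteDimensional ℝ (prolongation T) :=
  Submodule.finiteDimensional_of_le (S₂ := LinearMap.range (LinearMap.compRight ℝ T.subtype))
    fun p hp => ⟨p.codRestrict T hp.1, rfl⟩

variable (T U) in
theorem finrank_prolongationKer [FiniteDimensional ℝ E] [FiniteDimensional ℝ T] (e : E) :
    finrank ℝ (prolongationKer T U) = finrank ℝ (LinearMap.range (prolongationEval T U e)) +
      finrank ℝ (prolongationKer T (ℝ ∙ e ⊔ U)) := by
  have := finiteDimensional_prolongation (T := T)
  have : FiniteDimensional ℝ (prolongationKer T U) := Submodule.finiteDimensional_of_le inf_le_left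
  have hle : prolongationKer T (ℝ ∙ e ⊔ U) ≤ prolongationKer T U := fun p hp =>
    mem_prolongationKer_iff.2 ((mem_prolongationKer_iff.1 hp).imp_right le_sup_right.trans)
  refine (LinearMap.finrank_range_add_finrank_ker (K := ℝ) (V := prolongationKer T U)
    (V₂ := ↥(T ⊓ vanishingOn (k + 1) U)) (prolongationEval T U e)).symm.trans ?_
  rw [ker_prolongationEval, (Submodule.submoduleOfEquivOfLe hle).finrank_eq]

end Prolongation

/-- A basis is quasi-regular for the tableau `T` if, for the flag `W_i` it spans, every element of
`T_{W_i}` is the value at the next basis vector of an element of the prolongation vanishing on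
`W_i`. -/
def IsQuasiRegular {k n : ℕ} (T : Submodule ℝ (E [⋀^Fin (k + 1)]→ₗ[ℝ] F))
    (b : Basis (Fin n) ℝ E) : Prop :=
  ∀ i : Fin n, Function.Surjective (prolongationEval T (b.flag i.castSucc) (b i))

section CartanTest

variable {k n : ℕ} {T : Submodule ℝ (E [⋀^Fin (k + 1)]→ₗ[ℝ] F)} [FiniteDimensional ℝ T]
  {b : Basis (Fin n) ℝ E}

variable (T b) in
theorem finrank_prolongation_eq_sum_finrank_range : finrank ℝ (prolongation T) =
    ∑ i : Fin n, finrank ℝ (LinearMap.range (prolongationEval T (b.flag i.castSucc) (b i))) := by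
  have : FiniteDimensional ℝ E := b.finiteDimensional_of_finite
  have hzero : finrank ℝ (prolongationKer T (b.flag 0)) = finrank ℝ (prolongation T) := by
    rw [b.flag_zero, prolongationKer_bot]
  have hlast : finrank ℝ (prolongationKer T (b.flag (Fin.last n))) = 0 := by
    rw [b.flag_last, prolongationKer_top, finrank_bot]
  have hstep (i : Fin n) : finrank ℝ (prolongationKer T (b.flag i.castSucc)) =
      finrank ℝ (LinearMap.range (prolongationEval T (b.flag i.castSucc) (b i))) +
        finrank ℝ (prolongationKer T (b.flag i.succ)) := by
    rw [b.flag_succ]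
    exact finrank_prolongationKer T (b.flag i.castSucc) (b i)
  have htelescope := (Fin.sum_univ_castSucc fun i => finrank ℝ (prolongationKer T (b.flag i))).symm
  simp only [Fin.sum_univ_succ (fun i => finrank ℝ (prolongationKer T (b.flag i))), hstep,
    Finset.sum_add_distrib] at htelescope
  omega

theorem isQuasiRegular_iff_finrank_prolongation_eq : IsQuasiRegular T b ↔
    finrank ℝ (prolongation T) = ∑ i : Fin n,
      finrank ℝ (T ⊓ vanishingOn (k + 1) (b.flag i.castSucc) :
        Submodule ℝ (E [⋀^Fin (k + 1)]→ₗ[ℝ] F)) := by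
  have hfin (i : Fin n) : FiniteDimensional ℝ (T ⊓ vanishingOn (k + 1) (b.flag i.castSucc) :
      Submodule ℝ (E [⋀^Fin (k + 1)]→ₗ[ℝ] F)) := Submodule.finiteDimensional_of_le inf_le_left
  rw [finrank_prolongation_eq_sum_finrank_range T b,
    Finset.sum_eq_sum_iff_of_le fun i _ => Submodule.finrank_le _]
  refine forall_congr' fun i => ?_
  rw [← LinearMap.range_eq_top, imp_iff_right (Finset.mem_univ i)]
  exact ⟨fun h => by rw [h, finrank_top], Submodule.eq_top_of_finrank_eq⟩

theorem vanishingOn_antitone (m : ℕ) :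
    Antitone (vanishingOn m : Submodule ℝ E → Submodule ℝ (E [⋀^Fin m]→ₗ[ℝ] F)) :=
  fun _ _ hU _ hc u hu => hc u fun i => hU (hu i)

theorem vanishingOn_top (m : ℕ) :
    (vanishingOn m ⊤ : Submodule ℝ (E [⋀^Fin m]→ₗ[ℝ] F)) = ⊥ :=
  (Submodule.eq_bot_iff _).2 fun _ hc => AlternatingMap.ext fun u => hc u fun _ => trivial

theorem sum_succ_mul_sub_of_antitone {n : ℕ} {t : Fin (n + 1) → ℕ} (ht : Antitone t) :
    ∑ i : Fin n, ((i : ℕ) + 1) * (t i.castSucc - t i.succ) + n * t (Fin.last n) =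
      ∑ i : Fin n, t i.castSucc := by
  induction n with
  | zero => simp
  | succ n ih =>
    have hinit := ih (t := fun i => t i.castSucc) fun i j hij => ht (by simpa using hij)
    obtain ⟨d, hd⟩ := Nat.exists_eq_add_of_le (ht (Fin.le_last (Fin.last n).castSucc))
    rw [Fin.sum_univ_castSucc, Fin.sum_univ_castSucc (fun i : Fin (n + 1) => t i.castSucc),
      ← hinit]
    simp only [Fin.val_castSucc, Fin.val_last, Fin.succ_last, Fin.succ_castSucc, hd,
      Nat.add_sub_cancel_left]
    ring

variable (T b) in
theorem sum_succ_mul_character_eq :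
    ∑ i : Fin n, ((i : ℕ) + 1) *
      (finrank ℝ (T ⊓ vanishingOn (k + 1) (b.flag i.castSucc) :
        Submodule ℝ (E [⋀^Fin (k + 1)]→ₗ[ℝ] F)) -
      finrank ℝ (T ⊓ vanishingOn (k + 1) (b.flag i.succ) :
        Submodule ℝ (E [⋀^Fin (k + 1)]→ₗ[ℝ] F))) =
      ∑ i : Fin n, finrank ℝ (T ⊓ vanishingOn (k + 1) (b.flag i.castSucc) :
        Submodule ℝ (E [⋀^Fin (k + 1)]→ₗ[ℝ] F)) := by
  have hfin (U : Submodule ℝ E) : FiniteDimensional ℝ (T ⊓ vanishingOn (k + 1) U :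
      Submodule ℝ (E [⋀^Fin (k + 1)]→ₗ[ℝ] F)) := Submodule.finiteDimensional_of_le inf_le_left
  rw [← sum_succ_mul_sub_of_antitone fun i j hij => Submodule.finrank_mono
    (inf_le_inf_left T (vanishingOn_antitone (k + 1) (b.flag_mono hij))), b.flag_last,
    vanishingOn_top, inf_bot_eq, finrank_bot, mul_zero, add_zero]

end CartanTest

section Exactness

variable {k m : ℕ} {T : Submodule ℝ (E [⋀^Fin (k + 1)]→ₗ[ℝ] F)}
  {ξ : E [⋀^Fin (m + 2)]→ₗ[ℝ] E [⋀^Fin (k + 1)]→ₗ[ℝ] F}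

/-- With `s` a linear section of the evaluation at `e`, the correction is `ζ = s ∘ ι_e ξ`: it is
killed by contraction with `U` and `e`, so that `ι_x δζ = ζ(·)(x)` for `x` in their span. -/
theorem exists_le_ker_curryLeft_sub_spencerDelta {U : Submodule ℝ E} {e : E}
    (hsurj : Function.Surjective (prolongationEval T U e)) (hT : ∀ w, ξ w ∈ T)
    (hξ : SpencerZero ξ) (hU : U ≤ LinearMap.ker ξ.curryLeft) :
    ∃ ζ : E [⋀^Fin (m + 1)]→ₗ[ℝ] (E →ₗ[ℝ] E [⋀^Fin (k + 1)]→ₗ[ℝ] F),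
      (∀ w, ζ w ∈ prolongation T) ∧
        ℝ ∙ e ⊔ U ≤ LinearMap.ker (ξ - spencerDelta ζ).curryLeft := by
  have : Module.Free ℝ (T ⊓ vanishingOn (k + 1) U : Submodule ℝ (E [⋀^Fin (k + 1)]→ₗ[ℝ] F)) :=
    Module.Free.of_divisionRing ℝ _
  obtain ⟨s, hs⟩ := (prolongationEval T U e).exists_rightInverse_of_surjective
    (LinearMap.range_eq_top.2 hsurj)
  let η := (ξ.curryLeft e).codRestrict (T ⊓ vanishingOn (k + 1) U)
    fun w => ⟨hT _, hξ.mem_vanishingOn hU _⟩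
  let ζ := ((prolongationKer T U).subtype ∘ₗ s).compAlternatingMap η
  have hζ_e (w : Fin (m + 1) → E) : ζ w e = ξ.curryLeft e w :=
    congrArg Subtype.val (LinearMap.congr_fun hs (η w))
  have hζ_mem (w : Fin (m + 1) → E) :
      ζ w ∈ prolongation T ∧ U ≤ LinearMap.ker (ζ w) :=
    mem_prolongationKer_iff.1 (s (η w)).2
  have hζ_curry {x : E} (hx : x ∈ ℝ ∙ e ⊔ U) : ζ.curryLeft x = 0 := by
    have hη : η.curryLeft x = 0 := AlternatingMap.ext fun w =>
      Subtype.ext (AlternatingMap.congr_fun (span_singleton_sup_le_ker_curryLeft hU e hx) w)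
    rw [AlternatingMap.curryLeft_compAlternatingMap, hη]
    exact LinearMap.compAlternatingMap_zero _
  have hδ {x : E} (hx : x ∈ ℝ ∙ e ⊔ U) (w : Fin (m + 1) → E) :
      (ξ - spencerDelta ζ).curryLeft x w = ξ.curryLeft x w - ζ w x := by
    rw [← spencerDelta_curryLeft_of_curryLeft_eq_zero (hζ_curry hx)]
    rfl
  have he : e ∈ ℝ ∙ e ⊔ U := Submodule.mem_sup_left (Submodule.mem_span_singleton_self e)
  refine ⟨ζ, fun w => (hζ_mem w).1, sup_le ?_ fun u hu => ?_⟩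
  · rw [Submodule.span_singleton_le_iff_mem]
    exact AlternatingMap.ext fun w => by rw [hδ he, hζ_e, sub_self]; rfl
  · refine AlternatingMap.ext fun w => ?_
    rw [hδ (Submodule.mem_sup_right hu), LinearMap.mem_ker.1 (hU hu),
      LinearMap.mem_ker.1 ((hζ_mem w).2 hu), AlternatingMap.zero_apply, sub_zero]

theorem IsQuasiRegular.exists_spencerDelta_eq {n : ℕ} {b : Basis (Fin n) ℝ E}
    (hb : IsQuasiRegular T b) (hT : ∀ w, ξ w ∈ T) (hξ : SpencerZero ξ) :
    ∃ ζ : E [⋀^Fin (m + 1)]→ₗ[ℝ] (E →ₗ[ℝ] E [⋀^Fin (k + 1)]→ₗ[ℝ] F),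
      (∀ w, ζ w ∈ prolongation T) ∧ spencerDelta ζ = ξ := by
  have hflag (i : Fin (n + 1)) :
      ∃ ζ : E [⋀^Fin (m + 1)]→ₗ[ℝ] (E →ₗ[ℝ] E [⋀^Fin (k + 1)]→ₗ[ℝ] F),
        (∀ w, ζ w ∈ prolongation T) ∧
          b.flag i ≤ LinearMap.ker (ξ - spencerDelta ζ).curryLeft := by
    induction i using Fin.induction with
    | zero => exact ⟨0, fun _ => Submodule.zero_mem _, b.flag_zero.trans_le bot_le⟩
    | succ i ih =>
      obtain ⟨ζ, hζ, hker⟩ := ih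
      have hcoboundary : SpencerZero (spencerDelta ζ) :=
        spencerZero_spencerDelta fun w => (mem_prolongation_iff.1 (hζ w)).2
      obtain ⟨ζ', hζ', hker'⟩ := exists_le_ker_curryLeft_sub_spencerDelta (hb i)
        (fun w => T.sub_mem (hT w) (spencerDelta_mem (fun v => (hζ v).1) w))
        (hξ.sub hcoboundary) hker
      refine ⟨ζ + ζ', fun w => Submodule.add_mem _ (hζ w) (hζ' w), ?_⟩
      rwa [map_add, ← sub_sub, b.flag_succ]
  obtain ⟨ζ, hζ, hker⟩ := hflag (Fin.last n)
  rw [b.flag_last, top_le_iff, LinearMap.ker_eq_top] at hker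
  exact ⟨ζ, hζ, (sub_eq_zero.1 (eq_zero_of_curryLeft_eq_zero hker)).symm⟩

end Exactness

end Tableau


theorem finiteDimensional_alternatingMap (K M N ι : Type*) [Field K] [AddCommGroup M] [Module K M]
    [FiniteDimensional K M] [AddCommGroup N] [Module K N] [FiniteDimensional K N] [Finite ι] :
    FiniteDimensional K (M [⋀^ι]→ₗ[K] N) :=
  FiniteDimensional.of_injective (AlternatingMap.toMultilinearMapLM (R := K) (S := K))
    AlternatingMap.coe_multilinearMap_injective

theorem cartan_test_spencer_exact_general {E F : Type*} [AddCommGroup E] [Module ℝ E]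
    [AddCommGroup F] [Module ℝ F] {k n : ℕ}
    (T : Submodule ℝ (AlternatingMap ℝ E F (Fin (k + 1)))) [FiniteDimensional ℝ T]
    (Wf : Fin (n + 1) → Submodule ℝ E)
    (hmono : Monotone Wf) (hbot : Wf 0 = ⊥) (htop : Wf (Fin.last n) = ⊤)
    (hdim : ∀ i : Fin (n + 1), finrank ℝ (Wf i) = (i : ℕ))
    (hcartan : finrank ℝ ↥(prolongation T) =
      ∑ i : Fin n, ((i : ℕ) + 1) *
        (finrank ℝ ↥(T ⊓ vanishingOn (k + 1) (Wf i.castSucc)) -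
         finrank ℝ ↥(T ⊓ vanishingOn (k + 1) (Wf i.succ))))
    (m : ℕ) (ξ : AlternatingMap ℝ E (AlternatingMap ℝ E F (Fin (k + 1))) (Fin (m + 2)))
    (hT : ∀ w : Fin (m + 2) → E, ξ w ∈ T) (hξ : SpencerZero ξ) :
    ∃ ζ : AlternatingMap ℝ E (E →ₗ[ℝ] AlternatingMap ℝ E F (Fin (k + 1))) (Fin (m + 1)),
      (∀ w : Fin (m + 1) → E, ζ w ∈ prolongation T) ∧
      ∀ w : Fin (m + 2) → E,
        ξ w = ∑ i : Fin (m + 2), ((-1 : ℝ) ^ (i : ℕ)) • ζ (w ∘ i.succAbove) (w i) := by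
  obtain ⟨b, rfl⟩ := exists_basis_flag_eq hmono hbot htop hdim
  have hb : IsQuasiRegular T b := isQuasiRegular_iff_finrank_prolongation_eq.2
    (hcartan.trans (sum_succ_mul_character_eq T b))
  obtain ⟨ζ, hζ, rfl⟩ := hb.exists_spencerDelta_eq hT hξ
  refine ⟨ζ, hζ, fun w => ?_⟩
  simp only [spencerDelta_apply, neg_one_pow_smul_eq_zsmul]
  rfl

/-- **Cartan's test implies vanishing of the Spencer cohomology groups `H^{0,l}`**:
if Cartan's bound `dim T^{(1)} = ∑ i·sᵢ` is attained for some full flag, then for every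
`l = m + 2 ≥ 2` the Spencer sequence is exact at `Λ^l(W;T)`: every alternating `l`-linear
`ξ : W^l → T` with `δξ = 0` is the alternation `δζ` of some alternating `(l−1)`-linear
`ζ : W^{l−1} → T^{(1)}`, i.e. `ξ(w₁,…,w_l) = ∑ᵢ (-1)^i ζ(w₁,…,ŵᵢ,…,w_l)(wᵢ)`. -/
theorem cartan_test_spencer_exact {k n : ℕ}
    (T : Submodule ℝ (AlternatingMap ℝ W V (Fin (k + 1))))
    (Wf : Fin (n + 1) → Submodule ℝ W)
    (hmono : Monotone Wf) (hbot : Wf 0 = ⊥) (htop : Wf (Fin.last n) = ⊤)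
    (hdim : ∀ i : Fin (n + 1), finrank ℝ (Wf i) = (i : ℕ))
    (hcartan : finrank ℝ ↥(prolongation T) =
      ∑ i : Fin n, ((i : ℕ) + 1) *
        (finrank ℝ ↥(T ⊓ vanishingOn (k + 1) (Wf i.castSucc)) -
         finrank ℝ ↥(T ⊓ vanishingOn (k + 1) (Wf i.succ)))) :
    ∀ (m : ℕ)
      (ξ : AlternatingMap ℝ W (AlternatingMap ℝ W V (Fin (k + 1))) (Fin (m + 2))),
      (∀ w : Fin (m + 2) → W, ξ w ∈ T) → SpencerZero ξ →
      ∃ ζ : AlternatingMap ℝ W (W →ₗ[ℝ] AlternatingMap ℝ W V (Fin (k + 1))) (Fin (m + 1)),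
        (∀ w : Fin (m + 1) → W, ζ w ∈ prolongation T) ∧
        ∀ w : Fin (m + 2) → W,
          ξ w = ∑ i : Fin (m + 2), ((-1 : ℝ) ^ (i : ℕ)) • ζ (w ∘ i.succAbove) (w i) := by
  have := finiteDimensional_alternatingMap ℝ W V (Fin (k + 1))
  exact cartan_test_spencer_exact_general T Wf hmono hbot htop hdim hcartan
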